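/- arXiv:2001.07153 — 2 statements merged into one kernel-verified Lean document; each statement's English description precedes it below -/
import Mathlib

section
/- In the Simmons noiseless message-authentication model, the success probability of an impersonation attack is lower bounded by exp(−I(K;W)), where I denotes mutual information (with natural logarithm). Precisely: let K and M be independent random variables on a probability space, taking values in nonempty finite sets 𝒦 (keys) and ℳ (messages), let f : 𝒦 × ℳ → 𝒲 be an encoding function into a finite set 𝒲 such that f(k,·) is injective for every key k, and let W = f(K,M) be the transmitted signal. Define the impersonation success probability P_I = max_{w∈𝒲} ℙ[∃ m ∈ ℳ, f(K,m) = w]. Then P_I ≥ exp(−I[K : W]). -/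
/-!
Write `p k w` for the joint law of `(K, W)`, with marginals `a k` and `q w`, so that
`-I[K : W] = ∑ p k w * log (a k * q w / p k w)`, the sum being over the support `S` of `p`.
Concavity of the logarithm bounds this by `log ∑_{(k, w) ∈ S} a k * q w`. If `(k, w) ∈ S` then
`w = f k m` for some message `m`, so for fixed `w` the values `a k` with `(k, w) ∈ S` add up to
at most `ℙ[∃ m, f K m = w] ≤ P_I`; averaging against `q` gives `-I[K : W] ≤ log P_I`.

`exp_neg_le_of_support_le` is this argument for an arbitrary finite joint law. Jensen's inequality
enters as the tangent-line bound `log t ≤ log P + t / P - 1`, which is `log_sub_le`.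
-/

open MeasureTheory ProbabilityTheory Real

namespace Simmons

variable {Ω : Type*} [MeasureSpace Ω]

/-- Shannon entropy (natural logarithm) of a random variable with values in a finite set. -/
noncomputable def entropy {S : Type*} [Fintype S] (X : Ω → S) : ℝ :=
  ∑ s : S, Real.negMulLog ((ℙ (X ⁻¹' {s})).toReal)

/-- Conditional Shannon entropy `H[X | Y] = H[(X, Y)] - H[Y]` (natural logarithm). -/
noncomputable def condEntropy {S T : Type*} [Fintype S] [Fintype T]
    (X : Ω → S) (Y : Ω → T) : ℝ :=
  entropy (fun ω => (X ω, Y ω)) - entropy Y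

/-- Mutual information `I[X : Y] = H[X] - H[X | Y]` (natural logarithm). -/
noncomputable def mutualInfo {S T : Type*} [Fintype S] [Fintype T]
    (X : Ω → S) (Y : Ω → T) : ℝ :=
  entropy X - condEntropy X Y

end Simmons

open Simmons

/-- The tangent-line bound `log t ≤ log P + t / P - 1` at `t = a * q / p`, multiplied by `p`.
The case `p = 0` holds because the indicator then removes the term `a * q / P`. -/
lemma log_sub_le {p a q P : ℝ} (hp : 0 ≤ p) (ha : p ≤ a) (hq : p ≤ q) (hP : 0 < P) :
    p * log a + p * log q - p * log p ≤
      p * log P + (if 0 < p then a else 0) * q / P - p := by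
  rcases hp.eq_or_lt with rfl | hp
  · simp
  · have ha' : 0 < a := hp.trans_le ha
    have hq' : 0 < q := hp.trans_le hq
    have h := log_le_sub_one_of_pos (show 0 < a * q / (p * P) by positivity)
    rw [log_div (by positivity) (by positivity), log_mul ha'.ne' hq'.ne',
      log_mul hp.ne' hP.ne'] at h
    have h2 := mul_le_mul_of_nonneg_left h hp.le
    have h3 : p * (a * q / (p * P) - 1) = a * q / P - p := by field_simp
    rw [if_pos hp]
    linarith

/-- For a finite joint law `p` with marginals `a`, `q`, if every fibre `{k | 0 < p k w}` of the
support has `a`-mass at most `P`, then `exp (-I) ≤ P`, where `I = H(a) - (H(p) - H(q))`. -/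
lemma exp_neg_le_of_support_le {α β : Type*} [Fintype α] [Fintype β]
    (p : α → β → ℝ) (a : α → ℝ) (q : β → ℝ) (P : ℝ)
    (hp : ∀ k w, 0 ≤ p k w) (ha : ∀ k, ∑ w, p k w = a k) (hq : ∀ w, ∑ k, p k w = q w)
    (hone : ∑ w, q w = 1) (hP : ∀ w, ∑ k, (if 0 < p k w then a k else 0) ≤ P) :
    exp (-(∑ k, negMulLog (a k) - (∑ x : α × β, negMulLog (p x.1 x.2) - ∑ w, negMulLog (q w))))
      ≤ P := by
  have hpa : ∀ k w, p k w ≤ a k := fun k w => by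
    rw [← ha k]
    exact Finset.single_le_sum (f := fun w => p k w) (fun i _ => hp k i) (Finset.mem_univ w)
  have hpq : ∀ k w, p k w ≤ q w := fun k w => by
    rw [← hq w]
    exact Finset.single_le_sum (f := fun k => p k w) (fun i _ => hp i w) (Finset.mem_univ k)
  have hq0 : ∀ w, 0 ≤ q w := fun w => by
    rw [← hq w]
    exact Finset.sum_nonneg fun k _ => hp k w
  have hP0 : 0 < P := by
    -- The total mass is `1`, so some `p k w` is positive, and `P ≥ a k ≥ p k w`.
    obtain ⟨w, -, hw⟩ : ∃ w ∈ Finset.univ, 0 < q w := by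
      by_contra! h
      have := Finset.sum_nonpos h
      linarith
    obtain ⟨k, -, hk⟩ : ∃ k ∈ Finset.univ, 0 < p k w := by
      by_contra! h
      have := Finset.sum_nonpos h
      linarith [hq w]
    refine lt_of_lt_of_le (hk.trans_le (hpa k w)) (le_trans ?_ (hP w))
    have := Finset.single_le_sum (f := fun k => if 0 < p k w then a k else 0) (fun i _ => by
      split_ifs with h
      · exact h.le.trans (hpa i w)
      · exact le_rfl) (Finset.mem_univ k)
    simpa [hk] using this
  have hsum : ∑ w, ∑ k, (p k w * log (a k) + p k w * log (q w) - p k w * log (p k w)) ≤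
      ∑ w, ∑ k, (p k w * log P + (if 0 < p k w then a k else 0) * q w / P - p k w) :=
    Finset.sum_le_sum fun w _ => Finset.sum_le_sum fun k _ =>
      log_sub_le (hp k w) (hpa k w) (hpq k w) hP0
  have hright : ∑ w, ∑ k, (p k w * log P + (if 0 < p k w then a k else 0) * q w / P - p k w)
      ≤ log P := by
    have h1 : ∀ w, ∑ k, (p k w * log P + (if 0 < p k w then a k else 0) * q w / P - p k w)
        ≤ q w * log P := fun w => by
      rw [Finset.sum_sub_distrib, Finset.sum_add_distrib, ← Finset.sum_mul, ← Finset.sum_div,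
        ← Finset.sum_mul, hq w]
      have : (∑ k, if 0 < p k w then a k else 0) * q w / P ≤ q w := by
        rw [div_le_iff₀ hP0, mul_comm (q w)]
        exact mul_le_mul_of_nonneg_right (hP w) (hq0 w)
      linarith
    calc _ ≤ ∑ w, q w * log P := Finset.sum_le_sum fun w _ => h1 w
      _ = log P := by rw [← Finset.sum_mul, hone, one_mul]
  have hleft : ∑ w, ∑ k, (p k w * log (a k) + p k w * log (q w) - p k w * log (p k w)) =
      -(∑ k, negMulLog (a k) -
        (∑ x : α × β, negMulLog (p x.1 x.2) - ∑ w, negMulLog (q w))) := by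
    have e1 : ∑ w, ∑ k, p k w * log (a k) = -∑ k, negMulLog (a k) := by
      rw [Finset.sum_comm, ← Finset.sum_neg_distrib]
      refine Finset.sum_congr rfl fun k _ => ?_
      rw [← Finset.sum_mul, ha k, negMulLog]
      ring
    have e2 : ∑ w, ∑ k, p k w * log (q w) = -∑ w, negMulLog (q w) := by
      rw [← Finset.sum_neg_distrib]
      refine Finset.sum_congr rfl fun w _ => ?_
      rw [← Finset.sum_mul, hq w, negMulLog]
      ring
    have e3 : ∑ w, ∑ k, p k w * log (p k w) = -∑ x : α × β, negMulLog (p x.1 x.2) := by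
      rw [Finset.sum_comm, Fintype.sum_prod_type]
      simp [negMulLog]
    simp only [Finset.sum_sub_distrib, Finset.sum_add_distrib]
    rw [e1, e2, e3]
    ring
  rw [← hleft]
  exact (exp_le_exp.mpr (hsum.trans hright)).trans_eq (exp_log hP0)

/-- The law of total probability for a random variable with finitely many values. -/
lemma sum_inter_preimage_singleton {Ω S : Type*} [MeasurableSpace Ω] (μ : Measure Ω)
    [IsFiniteMeasure μ] [Fintype S] (X : Ω → S) (hX : ∀ s, MeasurableSet (X ⁻¹' {s}))
    (A : Set Ω) : ∑ s, (μ (A ∩ X ⁻¹' {s})).toReal = (μ A).toReal := by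
  have h := sum_measureReal_preimage_singleton (μ := μ.restrict A) Finset.univ (f := X)
    (fun s _ => hX s)
  simpa [measureReal_def, Measure.restrict_apply (hX _), Set.inter_comm A] using h

/-- **Simmons' impersonation bound.** In the noiseless message-authentication model with
transmitted signal `W = f(K, M)`, the success probability of an impersonation attack,
`P_I = max_{w} ℙ[∃ m, f(K, m) = w]`, is lower bounded by `exp (-I[K : W])`. -/
theorem impersonation_lower_bound
    {Ω : Type*} [MeasureSpace Ω] [IsProbabilityMeasure (ℙ : Measure Ω)]
    {𝒦 ℳ 𝒲 : Type*} [Fintype 𝒦] [Nonempty 𝒦] [Fintype ℳ] [Nonempty ℳ]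
    [Fintype 𝒲] [Nonempty 𝒲]
    [MeasurableSpace 𝒦] [MeasurableSingletonClass 𝒦]
    [MeasurableSpace ℳ] [MeasurableSingletonClass ℳ]
    (K : Ω → 𝒦) (M : Ω → ℳ) (hK : Measurable K) (hM : Measurable M)
    (hKM : IndepFun K M ℙ)
    (f : 𝒦 → ℳ → 𝒲) (hf : ∀ k, Function.Injective (f k))
    (W : Ω → 𝒲) (hW : ∀ ω, W ω = f (K ω) (M ω))
    (P_I : ℝ) (hPI : P_I = ⨆ w : 𝒲, (ℙ {ω | ∃ m, f (K ω) m = w}).toReal) :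
    P_I ≥ Real.exp (-(mutualInfo K W)) := by
  -- The discrete σ-algebra makes `W` measurable, `𝒦 × ℳ` being finite.
  letI : MeasurableSpace 𝒲 := ⊤
  have hWm : Measurable W := by
    have h : W = (fun x : 𝒦 × ℳ => f x.1 x.2) ∘ fun ω => (K ω, M ω) := funext hW
    rw [h]
    exact (measurable_of_finite _).comp (hK.prodMk hM)
  have hKs : ∀ k, MeasurableSet (K ⁻¹' {k}) := fun k => hK (measurableSet_singleton k)
  have hWs : ∀ w, MeasurableSet (W ⁻¹' {w}) := fun w => hWm trivial
  have hpair : ∀ x : 𝒦 × 𝒲,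
      (fun ω => (K ω, W ω)) ⁻¹' {x} = K ⁻¹' {x.1} ∩ W ⁻¹' {x.2} := fun x => by
    ext ω
    simp [Prod.ext_iff]
  have hfibre : ∀ w, ∑ k, (if 0 < (ℙ (K ⁻¹' {k} ∩ W ⁻¹' {w})).toReal
      then (ℙ (K ⁻¹' {k})).toReal else 0) ≤ P_I := fun w => by
    have hle : (ℙ {ω | ∃ m, f (K ω) m = w}).toReal ≤ P_I := by
      rw [hPI]
      exact le_ciSup (f := fun w => (ℙ {ω | ∃ m, f (K ω) m = w}).toReal)
        (Set.finite_range _).bddAbove w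
    refine le_trans ?_ hle
    rw [← sum_inter_preimage_singleton ℙ K hKs]
    refine Finset.sum_le_sum fun k _ => ?_
    split_ifs with h
    · -- A point of `{K = k, W = w}` exhibits a message `m` with `f k m = w`, so the whole event
      -- `{K = k}` lies in the acceptance event of `w`.
      obtain ⟨ω₀, hk₀, hw₀⟩ : (K ⁻¹' {k} ∩ W ⁻¹' {w}).Nonempty := by
        by_contra hne
        rw [Set.not_nonempty_iff_eq_empty.mp hne] at h
        simp at h
      simp only [Set.mem_preimage, Set.mem_singleton_iff] at hk₀ hw₀
      refine ENNReal.toReal_mono (measure_ne_top _ _) (measure_mono fun ω hω => ⟨?_, hω⟩)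
      exact ⟨M ω₀, by rw [show K ω = k from hω, ← hw₀, hW ω₀, hk₀]⟩
    · exact ENNReal.toReal_nonneg
  have key := exp_neg_le_of_support_le (fun k w => (ℙ (K ⁻¹' {k} ∩ W ⁻¹' {w})).toReal)
    (fun k => (ℙ (K ⁻¹' {k})).toReal) (fun w => (ℙ (W ⁻¹' {w})).toReal) P_I
    (fun _ _ => ENNReal.toReal_nonneg)
    (fun k => sum_inter_preimage_singleton ℙ W hWs _)
    (fun w => by
      simp_rw [Set.inter_comm _ (W ⁻¹' {w})]
      exact sum_inter_preimage_singleton ℙ K hKs _)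
    (by simpa using sum_inter_preimage_singleton ℙ W hWs Set.univ)
    hfibre
  simpa only [mutualInfo, condEntropy, entropy, hpair] using key
end

section
/- In the Simmons noiseless message-authentication model, the deception probability is lower bounded by the inverse square root of the key-space size: with K, M independent random variables valued in nonempty finite sets 𝒦 and ℳ, f : 𝒦 × ℳ → 𝒲 an encoding into a finite set 𝒲 with f(k,·) injective for every k, W = f(K,M), impersonation success probability P_I = max_{w} ℙ[∃ m, f(K,m) = w] and substitution success probability P_S = Σ_{w} ℙ[W = w] · max_{w'≠w} ℙ[∃ m, f(K,m) = w' | W = w], assuming P_I ≥ exp(−I[K:W]) and P_S ≥ exp(−H[K|W]), one has max(P_I, P_S) ≥ (card 𝒦)^{−1/2}. -/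
/-!
The two exponents add up to the entropy of the key, `I[K:W] + H[K|W] = H[K]`, and
`H[K] ≤ log (card 𝒦)` (`entropy_le_log_card`). Hence one of the exponents is at most
`log (card 𝒦) / 2`, and the corresponding assumed bound on `P_I` or `P_S` gives the claim.
-/

open MeasureTheory ProbabilityTheory Real

open Simmons

/-- The tangent-line bound `log y ≤ y - 1` at `y = 1 / (n p)`, multiplied by `p`. -/
lemma negMulLog_le_tangent {p n : ℝ} (hp : 0 ≤ p) (hn : 0 < n) :
    Real.negMulLog p ≤ p * Real.log n + n⁻¹ - p := by
  rcases hp.eq_or_lt with rfl | hp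
  · simp [hn.le]
  · have h := Real.log_le_sub_one_of_pos (show 0 < (n * p)⁻¹ by positivity)
    rw [Real.log_inv, Real.log_mul hn.ne' hp.ne'] at h
    have h2 := mul_le_mul_of_nonneg_left h hp.le
    have h3 : p * ((n * p)⁻¹ - 1) = n⁻¹ - p := by field_simp
    rw [h3] at h2
    unfold Real.negMulLog
    linarith

lemma entropy_le_log_card {Ω : Type*} [MeasureSpace Ω] [IsProbabilityMeasure (ℙ : Measure Ω)]
    {S : Type*} [Fintype S] [Nonempty S] [MeasurableSpace S] [MeasurableSingletonClass S]
    (X : Ω → S) (hX : Measurable X) : entropy X ≤ Real.log (Fintype.card S) := by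
  have hn : (0 : ℝ) < Fintype.card S := by exact_mod_cast Fintype.card_pos
  have hsum : ∑ s : S, (ℙ (X ⁻¹' {s})).toReal = 1 := by
    have h := sum_measureReal_preimage_singleton (μ := (ℙ : Measure Ω)) (f := X) Finset.univ
      (fun s _ => hX (measurableSet_singleton s))
    simpa [Measure.real] using h
  calc entropy X
      ≤ ∑ s : S, ((ℙ (X ⁻¹' {s})).toReal * Real.log (Fintype.card S)
          + (Fintype.card S : ℝ)⁻¹ - (ℙ (X ⁻¹' {s})).toReal) :=
        Finset.sum_le_sum fun s _ => negMulLog_le_tangent ENNReal.toReal_nonneg hn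
    _ = Real.log (Fintype.card S) := by
        rw [Finset.sum_sub_distrib, Finset.sum_add_distrib, ← Finset.sum_mul, hsum]
        simp

/-- **Simmons' deception bound.** In the noiseless message-authentication model, assuming the
impersonation bound `P_I ≥ exp (-I[K:W])` and the substitution bound `P_S ≥ exp (-H[K|W])`,
the deception probability satisfies `max P_I P_S ≥ (card 𝒦) ^ (-1/2)`. -/
theorem deception_lower_bound
    {Ω : Type*} [MeasureSpace Ω] [IsProbabilityMeasure (ℙ : Measure Ω)]
    {𝒦 ℳ 𝒲 : Type*} [Fintype 𝒦] [Nonempty 𝒦] [Fintype ℳ] [Nonempty ℳ]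
    [Fintype 𝒲] [Nonempty 𝒲]
    [MeasurableSpace 𝒦] [MeasurableSingletonClass 𝒦]
    [MeasurableSpace ℳ] [MeasurableSingletonClass ℳ]
    (K : Ω → 𝒦) (M : Ω → ℳ) (hK : Measurable K) (hM : Measurable M)
    (hKM : IndepFun K M ℙ)
    (f : 𝒦 → ℳ → 𝒲) (hf : ∀ k, Function.Injective (f k))
    (W : Ω → 𝒲) (hW : ∀ ω, W ω = f (K ω) (M ω))
    (P_I P_S : ℝ)
    (hPI : P_I = ⨆ w : 𝒲, (ℙ {ω | ∃ m, f (K ω) m = w}).toReal)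
    (hPS : P_S = ∑ w : 𝒲, (ℙ (W ⁻¹' {w})).toReal *
      ⨆ w' : {w' : 𝒲 // w' ≠ w},
        ((ℙ[|W ⁻¹' {w}]) {ω | ∃ m, f (K ω) m = (w' : 𝒲)}).toReal)
    (hI : P_I ≥ Real.exp (-(mutualInfo K W)))
    (hS : P_S ≥ Real.exp (-(condEntropy K W))) :
    max P_I P_S ≥ (Fintype.card 𝒦 : ℝ) ^ (-(1 / 2) : ℝ) := by
  have hn : (0 : ℝ) < Fintype.card 𝒦 := by exact_mod_cast Fintype.card_pos
  have hent := entropy_le_log_card K hK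
  have hsplit : mutualInfo K W + condEntropy K W = entropy K := by
    unfold mutualInfo; ring
  rw [ge_iff_le, Real.rpow_def_of_pos hn, le_max_iff]
  rcases le_total (mutualInfo K W) (condEntropy K W) with h | h
  · exact Or.inl ((Real.exp_le_exp.2 (by linarith)).trans hI)
  · exact Or.inr ((Real.exp_le_exp.2 (by linarith)).trans hS)
end
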